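/- (Gallucci implies Pappus.) Let K be a division ring. Suppose the Gallucci property holds in ℙ³(K): for all pairwise skew lines a, b, c and pairwise skew lines e, f, g with each of e, f, g meeting each of a, b, c, every common transversal h of {a,b,c} meets every common transversal d of {e,f,g}. Then the Pappus property holds in ℙ³(K): for every pair of distinct coplanar lines ℓ, ℓ', every three distinct points A, B, C on ℓ and every three distinct points A', B', C' on ℓ', none equal to the intersection point of ℓ and ℓ', the three points AB' ∩ A'B, AC' ∩ A'C, BC' ∩ B'C are collinear. -/

import Mathlib

/-!
The Gallucci property forces `K` to be commutative, and Pappus holds over every field.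

Commutativity: identify `K⁴` with `K² ⊕ K²`. The lines `K² ⊕ 0`, `0 ⊕ K²` and the diagonal are
pairwise skew, and each `{(α v, β v)}` with `v ∈ K²` nonzero is a common transversal of the three.
The lines `{(x, y, xm, ym)}` in turn meet the transversals given by `v = (1,0), (0,1), (1,1)`.
A nonzero common vector of `{(x, y, xm, ym)}` and of the transversal given by `v = (1, n)` yields
`nm = mn` (`mul_comm_of_gallucci`).

Pappus over a field: let `o` span `ℓ ∩ ℓ'`. The points on `ℓ` other than the intersection point
are spanned by `a, a + βo, a + γo`, those on `ℓ'` by `a', a' + β'o, a' + γ'o`, with `o, a, a'`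
independent. The three cross points are then spanned by `x₀ = β'a + βa' + ββ'o`,
`y₀ = γ'a + γa' + γγ'o` and `x₀ - y₀`, so they lie on the line spanned by `x₀` and `y₀`.
-/

/-- Three points (1-dimensional subspaces) of `ℙ³(K)` are collinear if they are contained in a
common 2-dimensional subspace of `K⁴`. -/
def Collinear3 {K : Type*} [DivisionRing K] (P Q R : Submodule K (Fin 4 → K)) : Prop :=
  ∃ W : Submodule K (Fin 4 → K), Module.finrank K W = 2 ∧ P ≤ W ∧ Q ≤ W ∧ R ≤ W

/-- The Pappus property in `ℙ³(K)`: for every pair of distinct coplanar lines `ℓ, ℓ'`, every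
three distinct points `A, B, C` on `ℓ` and `A', B', C'` on `ℓ'` (none equal to the
intersection point of `ℓ` and `ℓ'`), the three points `AB' ∩ A'B`, `AC' ∩ A'C`, `BC' ∩ B'C`
are collinear. -/
def PappusProperty (K : Type*) [DivisionRing K] : Prop :=
  ∀ l l' : Submodule K (Fin 4 → K),
    Module.finrank K l = 2 → Module.finrank K l' = 2 → l ≠ l' →
    (∃ W : Submodule K (Fin 4 → K), Module.finrank K W = 3 ∧ l ≤ W ∧ l' ≤ W) →
    ∀ A B C A' B' C' X Y Z : Submodule K (Fin 4 → K),
      Module.finrank K A = 1 → Module.finrank K B = 1 → Module.finrank K C = 1 →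
      Module.finrank K A' = 1 → Module.finrank K B' = 1 → Module.finrank K C' = 1 →
      Module.finrank K X = 1 → Module.finrank K Y = 1 → Module.finrank K Z = 1 →
      A ≤ l → B ≤ l → C ≤ l → A ≠ B → A ≠ C → B ≠ C →
      A' ≤ l' → B' ≤ l' → C' ≤ l' → A' ≠ B' → A' ≠ C' → B' ≠ C' →
      A ≠ l ⊓ l' → B ≠ l ⊓ l' → C ≠ l ⊓ l' →
      A' ≠ l ⊓ l' → B' ≠ l ⊓ l' → C' ≠ l ⊓ l' →
      X ≤ A ⊔ B' → X ≤ A' ⊔ B →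
      Y ≤ A ⊔ C' → Y ≤ A' ⊔ C →
      Z ≤ B ⊔ C' → Z ≤ B' ⊔ C →
      Collinear3 X Y Z

/-- The Gallucci property in `ℙ³(K)`: for all pairwise skew lines `a, b, c` and pairwise skew
lines `e, f, g` with each of `e, f, g` meeting each of `a, b, c`, every common transversal `h`
of `a, b, c` meets every common transversal `d` of `e, f, g`. -/
def GallucciProperty (K : Type*) [DivisionRing K] : Prop :=
  ∀ a b c e f g h d : Submodule K (Fin 4 → K),
    Module.finrank K a = 2 → Module.finrank K b = 2 → Module.finrank K c = 2 →
    Module.finrank K e = 2 → Module.finrank K f = 2 → Module.finrank K g = 2 →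
    Module.finrank K h = 2 → Module.finrank K d = 2 →
    a ⊓ b = ⊥ → a ⊓ c = ⊥ → b ⊓ c = ⊥ →
    e ⊓ f = ⊥ → e ⊓ g = ⊥ → f ⊓ g = ⊥ →
    e ⊓ a ≠ ⊥ → e ⊓ b ≠ ⊥ → e ⊓ c ≠ ⊥ →
    f ⊓ a ≠ ⊥ → f ⊓ b ≠ ⊥ → f ⊓ c ≠ ⊥ →
    g ⊓ a ≠ ⊥ → g ⊓ b ≠ ⊥ → g ⊓ c ≠ ⊥ →
    h ⊓ a ≠ ⊥ → h ⊓ b ≠ ⊥ → h ⊓ c ≠ ⊥ →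
    d ⊓ e ≠ ⊥ → d ⊓ f ≠ ⊥ → d ⊓ g ≠ ⊥ →
    h ⊓ d ≠ ⊥

/-! ### Commutativity from the Gallucci property -/

section Commutativity

variable {K : Type*} [DivisionRing K]

lemma finrank_span_pair_of_indep {V : Type*} [AddCommGroup V] [Module K V] {u v : V}
    (h : ∀ s t : K, s • u + t • v = 0 → s = 0 ∧ t = 0) :
    Module.finrank K (Submodule.span K {u, v}) = 2 := by
  have hli : LinearIndependent K ![u, v] := LinearIndependent.pair_iff.2 h
  have hr : Set.range ![u, v] = {u, v} := by
    simp [Matrix.range_cons, Matrix.range_empty, Set.pair_comm]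
  rw [← hr]
  simpa using finrank_span_eq_card hli

lemma inf_span_pair_eq_bot {V : Type*} [AddCommGroup V] [Module K V] {u v w z : V}
    (h : ∀ s t p q : K, s • u + t • v = p • w + q • z → s • u + t • v = 0) :
    Submodule.span K {u, v} ⊓ Submodule.span K {w, z} = ⊥ := by
  rw [eq_bot_iff]
  rintro x ⟨h1, h2⟩
  obtain ⟨s, t, rfl⟩ := Submodule.mem_span_pair.1 h1
  obtain ⟨p, q, hpq⟩ := Submodule.mem_span_pair.1 h2
  exact (Submodule.mem_bot K).2 (h s t p q hpq.symm)

lemma inf_span_pair_ne_bot {V : Type*} [AddCommGroup V] [Module K V] {u v w z : V}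
    (s t p q : K) (h : s • u + t • v = p • w + q • z) (h0 : s • u + t • v ≠ 0) :
    Submodule.span K {u, v} ⊓ Submodule.span K {w, z} ≠ ⊥ := by
  intro hb
  have hm : s • u + t • v ∈ Submodule.span K {u, v} ⊓ Submodule.span K {w, z} :=
    ⟨Submodule.mem_span_pair.2 ⟨s, t, rfl⟩, Submodule.mem_span_pair.2 ⟨p, q, h.symm⟩⟩
  rw [hb] at hm
  exact h0 ((Submodule.mem_bot K).1 hm)

/-- The lines handed to the Gallucci property are, in order, the three members `K² ⊕ 0`, `0 ⊕ K²`
and diagonal of one family, the transversals for `v = (1,0), (0,1), (1,1)`, the transversal for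
`v = (1, n)`, and `{(x, y, xm, ym)}`. -/
lemma mul_comm_of_gallucci (hg : GallucciProperty K) (m n : K) : m * n = n * m := by
  have key := hg
    (Submodule.span K {![1, 0, 0, 0], ![0, 1, 0, 0]})
    (Submodule.span K {![0, 0, 1, 0], ![0, 0, 0, 1]})
    (Submodule.span K {![1, 0, 1, 0], ![0, 1, 0, 1]})
    (Submodule.span K {![1, 0, 0, 0], ![0, 0, 1, 0]})
    (Submodule.span K {![0, 1, 0, 0], ![0, 0, 0, 1]})
    (Submodule.span K {![1, 1, 0, 0], ![0, 0, 1, 1]})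
    (Submodule.span K {![1, n, 0, 0], ![0, 0, 1, n]})
    (Submodule.span K {![1, 0, m, 0], ![0, 1, 0, m]})
    (by apply finrank_span_pair_of_indep; simp +contextual [funext_iff, Fin.forall_fin_succ])
    (by apply finrank_span_pair_of_indep; simp +contextual [funext_iff, Fin.forall_fin_succ])
    (by apply finrank_span_pair_of_indep; simp +contextual [funext_iff, Fin.forall_fin_succ])
    (by apply finrank_span_pair_of_indep; simp +contextual [funext_iff, Fin.forall_fin_succ])
    (by apply finrank_span_pair_of_indep; simp +contextual [funext_iff, Fin.forall_fin_succ])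
    (by apply finrank_span_pair_of_indep; simp +contextual [funext_iff, Fin.forall_fin_succ])
    (by apply finrank_span_pair_of_indep; simp +contextual [funext_iff, Fin.forall_fin_succ])
    (by apply finrank_span_pair_of_indep; simp +contextual [funext_iff, Fin.forall_fin_succ])
    (by
      apply inf_span_pair_eq_bot
      simp only [funext_iff, Fin.forall_fin_succ]
      simp
      grind)
    (by
      apply inf_span_pair_eq_bot
      simp only [funext_iff, Fin.forall_fin_succ]
      simp +contextual)
    (by
      apply inf_span_pair_eq_bot
      simp only [funext_iff, Fin.forall_fin_succ]
      simp +contextual)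
    (by
      apply inf_span_pair_eq_bot
      simp only [funext_iff, Fin.forall_fin_succ]
      simp
      grind)
    (by
      apply inf_span_pair_eq_bot
      simp only [funext_iff, Fin.forall_fin_succ]
      simp +contextual)
    (by
      apply inf_span_pair_eq_bot
      simp only [funext_iff, Fin.forall_fin_succ]
      simp +contextual)
    (inf_span_pair_ne_bot 1 0 1 0 (by simp) (by simp [funext_iff, Fin.forall_fin_succ]))
    (inf_span_pair_ne_bot 0 1 1 0 (by simp) (by simp [funext_iff, Fin.forall_fin_succ]))
    (inf_span_pair_ne_bot 1 1 1 0 (by simp) (by simp [funext_iff, Fin.forall_fin_succ]))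
    (inf_span_pair_ne_bot 1 0 0 1 (by simp) (by simp [funext_iff, Fin.forall_fin_succ]))
    (inf_span_pair_ne_bot 0 1 0 1 (by simp) (by simp [funext_iff, Fin.forall_fin_succ]))
    (inf_span_pair_ne_bot 1 1 0 1 (by simp) (by simp [funext_iff, Fin.forall_fin_succ]))
    (inf_span_pair_ne_bot 1 0 1 1 (by simp) (by simp [funext_iff, Fin.forall_fin_succ]))
    (inf_span_pair_ne_bot 0 1 1 1 (by simp) (by simp [funext_iff, Fin.forall_fin_succ]))
    (inf_span_pair_ne_bot 1 1 1 1 (by simp) (by simp [funext_iff, Fin.forall_fin_succ]))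
    (inf_span_pair_ne_bot 1 0 1 n (by simp) (by simp [funext_iff, Fin.forall_fin_succ]))
    (inf_span_pair_ne_bot 0 1 1 n (by simp) (by simp [funext_iff, Fin.forall_fin_succ]))
    (inf_span_pair_ne_bot 1 1 1 n (by simp) (by simp [funext_iff, Fin.forall_fin_succ]))
    (inf_span_pair_ne_bot 1 0 1 m (by simp) (by simp [funext_iff, Fin.forall_fin_succ]))
    (inf_span_pair_ne_bot 0 1 1 m (by simp) (by simp [funext_iff, Fin.forall_fin_succ]))
    (inf_span_pair_ne_bot 1 1 1 m (by simp) (by simp [funext_iff, Fin.forall_fin_succ]))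
  by_contra hne
  refine key (inf_span_pair_eq_bot fun s t p q h => ?_)
  simp only [funext_iff, Fin.forall_fin_succ] at h
  simp at h
  obtain ⟨h1, h2, h3, h4⟩ := h
  -- `h1`-`h4` read `s = p`, `sn = q`, `t = pm`, `tn = qm`
  subst h1 h2 h3
  have hs : s = 0 := by
    by_contra hs
    rw [mul_assoc, mul_assoc] at h4
    exact hne (mul_left_cancel₀ hs h4)
  simp [hs]

end Commutativity

/-! ### The Pappus property over a field -/

section Pappus

variable {K : Type*} [Field K] {V : Type*} [AddCommGroup V] [Module K V]

lemma exists_eq_span_singleton {B : Submodule K V} (hB : Module.finrank K B = 1) :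
    ∃ b : V, b ≠ 0 ∧ B = Submodule.span K {b} := by
  obtain ⟨⟨b, hb⟩, hb0, h⟩ := finrank_eq_one_iff'.1 hB
  refine ⟨b, by simpa using hb0, le_antisymm (fun x hx => ?_) (by simpa using hb)⟩
  obtain ⟨c, hc⟩ := h ⟨x, hx⟩
  exact Submodule.mem_span_singleton.2 ⟨c, congrArg Subtype.val hc⟩

/-- A point other than `⟨o⟩` on the line `⟨o, a⟩` is spanned by some `a + βo`. -/
lemma exists_eq_span_add_smul {l B : Submodule K V} (hl : Module.finrank K l = 2) {o a : V}
    (ho : o ∈ l) (ha : a ∈ l) (hind : ∀ s t : K, s • o + t • a = 0 → s = 0 ∧ t = 0)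
    (hB : Module.finrank K B = 1) (hBl : B ≤ l) (hBo : B ≠ Submodule.span K {o}) :
    ∃ β : K, B = Submodule.span K {a + β • o} := by
  have : FiniteDimensional K l := Module.finite_of_finrank_eq_succ hl
  have hspan : Submodule.span K {o, a} = l := by
    apply Submodule.eq_of_le_of_finrank_eq
    · rw [Submodule.span_le]
      rintro x (rfl | rfl) <;> assumption
    · rw [hl, finrank_span_pair_of_indep hind]
  obtain ⟨b, hb0, rfl⟩ := exists_eq_span_singleton hB
  have hbl : b ∈ l := hBl (Submodule.mem_span_singleton_self b)
  rw [← hspan] at hbl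
  obtain ⟨s, t, rfl⟩ := Submodule.mem_span_pair.1 hbl
  have ht : t ≠ 0 := by
    rintro rfl
    have hs : s ≠ 0 := by rintro rfl; simp at hb0
    apply hBo
    simpa using Submodule.span_singleton_smul_eq (IsUnit.mk0 s hs) o
  refine ⟨t⁻¹ * s, ?_⟩
  rw [← Submodule.span_singleton_smul_eq (IsUnit.mk0 t ht) (a + (t⁻¹ * s) • o), smul_add,
    smul_smul, mul_inv_cancel_left₀ ht, add_comm]

/-- A point of the cross intersection `⟨b₁, c₁⟩ ∩ ⟨c₂, b₂⟩`, where `bᵢ = a + βᵢo` and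
`cᵢ = a' + γᵢo`, in terms of the independent vectors `o, a, a'`. -/
lemma exists_of_mem_cross {o a a' x : V}
    (hind : ∀ s t u : K, s • o + t • a + u • a' = 0 → s = 0 ∧ t = 0 ∧ u = 0)
    {β₁ β₂ γ₁ γ₂ : K}
    (h1 : x ∈ Submodule.span K {a + β₁ • o} ⊔ Submodule.span K {a' + γ₁ • o})
    (h2 : x ∈ Submodule.span K {a' + γ₂ • o} ⊔ Submodule.span K {a + β₂ • o}) :
    ∃ s t : K, x = s • a + t • a' + (s * β₁ + t * γ₁) • o ∧
      s * β₁ + t * γ₁ = s * β₂ + t * γ₂ := by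
  rw [← Submodule.span_union, Set.singleton_union, Submodule.mem_span_pair] at h1 h2
  obtain ⟨s, t, rfl⟩ := h1
  obtain ⟨u, v, h⟩ := h2
  obtain ⟨h1, h2, h3⟩ := hind (s * β₁ + t * γ₁ - v * β₂ - u * γ₂) (s - v) (t - u) (by
    linear_combination (norm := module) (-1 : K) • h)
  refine ⟨s, t, by module, ?_⟩
  linear_combination h1 - β₂ * h2 - γ₂ * h3

/-- Pappus holds in projective space over a field. -/
lemma pappusProperty_of_field (K : Type*) [Field K] : PappusProperty K := by
  rintro l l' hl hl' hll ⟨W, hW, hlW, hlW'⟩ A B C A' B' C' X Y Z hA hB hC hA' hB' hC' - - -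
    hAl hBl hCl hAB hAC hBC hAl' hBl' hCl' hAB' hAC' hBC' hAO hBO hCO hAO' hBO' hCO'
    hX1 hX2 hY1 hY2 hZ1 hZ2
  -- two distinct lines in a plane meet in exactly one point
  have hO : Module.finrank K ↥(l ⊓ l') = 1 := by
    have h1 := Submodule.finrank_sup_add_finrank_inf_eq l l'
    have h2 := Submodule.finrank_mono (sup_le hlW hlW')
    have h3 := Submodule.finrank_mono (inf_le_left : l ⊓ l' ≤ l)
    have h4 : Module.finrank K ↥(l ⊓ l') ≠ 2 := fun h =>
      hll ((Submodule.eq_of_le_of_finrank_eq inf_le_left (h.trans hl.symm)).symm.trans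
        (Submodule.eq_of_le_of_finrank_eq inf_le_right (h.trans hl'.symm)))
    omega
  obtain ⟨o, ho0, hO⟩ := exists_eq_span_singleton hO
  obtain ⟨a, ha0, rfl⟩ := exists_eq_span_singleton hA
  obtain ⟨a', ha0', rfl⟩ := exists_eq_span_singleton hA'
  rw [hO] at hAO hBO hCO hAO' hBO' hCO'
  have hol : o ∈ l ⊓ l' := hO ▸ Submodule.mem_span_singleton_self o
  have hal : a ∈ l := hAl (Submodule.mem_span_singleton_self a)
  have hal' : a' ∈ l' := hAl' (Submodule.mem_span_singleton_self a')
  have hpair : ∀ p : Fin 4 → K, p ≠ 0 → Submodule.span K {p} ≠ Submodule.span K {o} →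
      ∀ s t : K, s • o + t • p = 0 → s = 0 ∧ t = 0 := by
    intro p hp0 hp s t hst
    have ht : t = 0 := by
      by_contra ht
      have hps : p = (-(t⁻¹ * s)) • o := by
        have := congrArg (t⁻¹ • ·) hst
        simp only [smul_add, smul_smul, inv_mul_cancel₀ ht, one_smul, smul_zero] at this
        linear_combination (norm := module) (1 : K) • this
      have hu : -(t⁻¹ * s) ≠ 0 := by
        intro hu
        rw [hu, zero_smul] at hps
        exact hp0 hps
      apply hp
      rw [hps, Submodule.span_singleton_smul_eq (IsUnit.mk0 _ hu)]
    subst ht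
    simpa [ho0] using hst
  have hpa := hpair a ha0 hAO
  have hpa' := hpair a' ha0' hAO'
  have hind : ∀ s t u : K, s • o + t • a + u • a' = 0 → s = 0 ∧ t = 0 ∧ u = 0 := by
    intro s t u h
    have hm : u • a' ∈ l ⊓ l' := by
      refine ⟨?_, l'.smul_mem u hal'⟩
      have : u • a' = (-s) • o + (-t) • a := by linear_combination (norm := module) (1 : K) • h
      rw [this]
      exact l.add_mem (l.smul_mem _ hol.1) (l.smul_mem _ hal)
    rw [hO] at hm
    obtain ⟨r, hr⟩ := Submodule.mem_span_singleton.1 hm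
    obtain ⟨-, hu⟩ := hpa' r (-u) (by rw [hr]; simp)
    have hu : u = 0 := by simpa using hu
    subst hu
    obtain ⟨hs, ht⟩ := hpa s t (by simpa using h)
    exact ⟨hs, ht, rfl⟩
  obtain ⟨β, rfl⟩ := exists_eq_span_add_smul hl hol.1 hal hpa hB hBl hBO
  obtain ⟨γ, rfl⟩ := exists_eq_span_add_smul hl hol.1 hal hpa hC hCl hCO
  obtain ⟨β', rfl⟩ := exists_eq_span_add_smul hl' hol.2 hal' hpa' hB' hBl' hBO'
  obtain ⟨γ', rfl⟩ := exists_eq_span_add_smul hl' hol.2 hal' hpa' hC' hCl' hCO'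
  have hβ : β ≠ 0 := by rintro rfl; simp at hAB
  have hγ : γ ≠ 0 := by rintro rfl; simp at hAC
  have hβ' : β' ≠ 0 := by rintro rfl; simp at hAB'
  have hγ' : γ' ≠ 0 := by rintro rfl; simp at hAC'
  have hβγ : β - γ ≠ 0 := by
    intro h; rw [sub_eq_zero] at h; subst h; exact hBC rfl
  have hβγ' : β' - γ' ≠ 0 := by
    intro h; rw [sub_eq_zero] at h; subst h; exact hBC' rfl
  refine ⟨Submodule.span K {β' • a + β • a' + (β * β') • o, γ' • a + γ • a' + (γ * γ') • o},
    finrank_span_pair_of_indep ?_, ?_, ?_, ?_⟩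
  · intro s t h
    obtain ⟨h1, h2, h3⟩ := hind (s * (β * β') + t * (γ * γ')) (s * β' + t * γ')
      (s * β + t * γ) (by linear_combination (norm := module) (1 : K) • h)
    -- eliminating `t` from the coefficients of `o` and `a` leaves `s β' (β - γ) = 0`
    have hs : s = 0 := by
      have : s * (β' * (β - γ)) = 0 := by linear_combination h1 - γ * h2
      simpa [hβ', hβγ] using this
    subst hs
    exact ⟨rfl, by simpa [hγ] using h3⟩
  · intro x hx
    obtain ⟨s, t, rfl, h⟩ := exists_of_mem_cross hind (β₁ := 0) (γ₁ := β') (γ₂ := 0) (β₂ := β)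
      (by simpa using hX1 hx) (by simpa using hX2 hx)
    have hs : s = t / β * β' := by field_simp; linear_combination -h
    refine Submodule.mem_span_pair.2 ⟨t / β, 0, ?_⟩
    subst hs
    match_scalars <;> field_simp <;> ring
  · intro x hx
    obtain ⟨s, t, rfl, h⟩ := exists_of_mem_cross hind (β₁ := 0) (γ₁ := γ') (γ₂ := 0) (β₂ := γ)
      (by simpa using hY1 hx) (by simpa using hY2 hx)
    have hs : s = t / γ * γ' := by field_simp; linear_combination -h
    refine Submodule.mem_span_pair.2 ⟨0, t / γ, ?_⟩
    subst hs
    match_scalars <;> field_simp <;> ring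
  · intro x hx
    obtain ⟨s, t, rfl, h⟩ := exists_of_mem_cross hind (hZ1 hx) (hZ2 hx)
    have hs : t = s / (β' - γ') * (β - γ) := by field_simp; linear_combination -h
    refine Submodule.mem_span_pair.2 ⟨s / (β' - γ'), -(s / (β' - γ')), ?_⟩
    subst hs
    match_scalars <;> field_simp <;> ring

end Pappus

/-- Gallucci implies Pappus in `ℙ³(K)` over a division ring `K`. -/
theorem gallucci_implies_pappus (K : Type*) [DivisionRing K]
    (hgallucci : GallucciProperty K) : PappusProperty K := by
  let _ : Field K := { ‹DivisionRing K› with mul_comm := mul_comm_of_gallucci hgallucci }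
  exact pappusProperty_of_field K
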